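/- For every t > 0, every x = (x₁,x₂,a) ∈ G with x ≠ e, and i = 1,2, the derivative of the heat kernel along X_i satisfies X_i p_t(x) = p_t(x) · (x_i/sinh r) · (1/r − cosh r/sinh r − r/(2t)), where r = r(x). -/

import Mathlib

open MeasureTheory Real Filter Set
open scoped ENNReal

noncomputable section

/-- The group `G = ℝ² ⋊ ℝ⁺`, realized as triples `(x₁, x₂, a)` (only `a > 0` is relevant). -/
abbrev G : Type := ℝ × ℝ × ℝ

/-- Group product `(x₁,x₂,a)·(x₁',x₂',a') = (x₁+a x₁', x₂+a x₂', a a')`. -/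
def gMul (x y : G) : G := (x.1 + x.2.2 * y.1, x.2.1 + x.2.2 * y.2.1, x.2.2 * y.2.2)

/-- Group inverse `(x₁,x₂,a)⁻¹ = (−x₁/a, −x₂/a, 1/a)`. -/
def gInv (x : G) : G := (-x.1 / x.2.2, -x.2.1 / x.2.2, 1 / x.2.2)

/-- The identity `e = (0,0,1)`. -/
def gE : G := (0, 0, 1)

/-- The right Haar measure `dρ = a⁻¹ dx₁ dx₂ da` (supported where `a > 0`). -/
def ρG : Measure G :=
  (volume : Measure G).withDensity fun x => ENNReal.ofReal (if 0 < x.2.2 then x.2.2⁻¹ else 0)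

/-- The modular function `δ(x₁,x₂,a) = a⁻²`. -/
def deltaG (x : G) : ℝ := (x.2.2 ^ 2)⁻¹

/-- `|x| = √(x₁² + x₂²)`. -/
def normG (x : G) : ℝ := Real.sqrt (x.1 ^ 2 + x.2.1 ^ 2)

/-- `cosh r(x) = (a + a⁻¹ + a⁻¹|x|²)/2`. -/
def coshArg (x : G) : ℝ := (x.2.2 + x.2.2⁻¹ + x.2.2⁻¹ * (x.1 ^ 2 + x.2.1 ^ 2)) / 2

/-- `r(x) ≥ 0` is determined by `cosh r(x) = coshArg x`; explicitly `r = arcosh (coshArg x)`. -/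
def rG (x : G) : ℝ := Real.log (coshArg x + Real.sqrt (coshArg x ^ 2 - 1))

/-- The left-invariant distance `d(x,y) = r(x⁻¹y)`. -/
def dG (x y : G) : ℝ := rG (gMul (gInv x) y)

/-- The heat kernel
`p_t(x) = (8π^{3/2})⁻¹ δ(x)^{1/2} (r(x)/sinh r(x)) t^{−3/2} exp(−r(x)²/(4t))`,
with `r/sinh r := 1` at `x = e`. -/
def heatK (t : ℝ) (x : G) : ℝ :=
  (8 * Real.pi ^ ((3 : ℝ)/2))⁻¹ * Real.sqrt (deltaG x) *
    (if rG x = 0 then 1 else rG x / Real.sinh (rG x)) *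
    t ^ (-(3 : ℝ)/2) * Real.exp (-(rG x ^ 2) / (4 * t))

/-- Convolution `f ∗ p_t(x) = ∫ f(xy⁻¹) p_t(y) dρ(y)`. -/
def convHeat (f : G → ℝ) (t : ℝ) (x : G) : ℝ := ∫ y, f (gMul x (gInv y)) * heatK t y ∂ρG

/-- The heat maximal operator `Mf(x) = sup_{t>0} |f ∗ p_t(x)|` (valued in `ℝ≥0∞`). -/
def maxHeat (f : G → ℝ) (x : G) : ℝ≥0∞ :=
  ⨆ (t : ℝ) (_ : 0 < t), ENNReal.ofReal |convHeat f t x|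

/-- Calderón–Zygmund sets. -/
def IsCZ (R : Set G) : Prop :=
  ∃ c : G, ∃ L r : ℝ, 0 < c.2.2 ∧ 0 < L ∧ 0 < r ∧
    R = Set.Icc (c.1 - L/2) (c.1 + L/2) ×ˢ
        (Set.Icc (c.2.1 - L/2) (c.2.1 + L/2) ×ˢ
         Set.Icc (c.2.2 * Real.exp (-r)) (c.2.2 * Real.exp r)) ∧
    (r < 1 → Real.exp 2 * c.2.2 * r ≤ L ∧ L < Real.exp 8 * c.2.2 * r) ∧
    (1 ≤ r → c.2.2 * Real.exp (2*r) ≤ L ∧ L < c.2.2 * Real.exp (8*r))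

/-- Atoms: `A ∈ L¹(ρ)` supported in a Calderón–Zygmund set `R`, with
`‖A‖_∞ ≤ ρ(R)⁻¹` and `∫ A dρ = 0`. -/
def IsAtomG (A : G → ℝ) : Prop :=
  Integrable A ρG ∧
  ∃ R : Set G, IsCZ R ∧ (∀ x ∉ R, A x = 0) ∧
    eLpNorm A ⊤ ρG ≤ (ρG R)⁻¹ ∧
    ∫ x, A x ∂ρG = 0

/-- `f = Σ_j lam_j A_j` with atoms `A_j`, `Σ_j |lam_j| < ∞`, converging in `L¹(ρ)`. -/
def IsH1Decomp (f : G → ℝ) (lam : ℕ → ℝ) (A : ℕ → G → ℝ) : Prop :=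
  (∀ j, IsAtomG (A j)) ∧ Summable (fun j => |lam j|) ∧
  Tendsto (fun N => eLpNorm (fun x => f x - ∑ j ∈ Finset.range N, lam j * A j x) 1 ρG)
    atTop (nhds 0)

/-- The Hardy space `H¹`. -/
def MemH1 (f : G → ℝ) : Prop :=
  Integrable f ρG ∧ ∃ lam A, IsH1Decomp f lam A

/-- `‖f‖_{H¹} = inf Σ_j |lam_j|` over all atomic decompositions. -/
def H1norm (f : G → ℝ) : ℝ :=
  sInf {s | ∃ lam A, IsH1Decomp f lam A ∧ s = ∑' j, |lam j|}

/-- The left-invariant vector field `X₀ = a ∂_a`. -/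
def X0 (f : G → ℝ) (x : G) : ℝ := x.2.2 * deriv (fun s => f (x.1, x.2.1, s)) x.2.2

/-- The left-invariant vector field `X₁ = a ∂_{x₁}`. -/
def X1 (f : G → ℝ) (x : G) : ℝ := x.2.2 * deriv (fun s => f (s, x.2.1, x.2.2)) x.1

/-- The left-invariant vector field `X₂ = a ∂_{x₂}`. -/
def X2 (f : G → ℝ) (x : G) : ℝ := x.2.2 * deriv (fun s => f (x.1, s, x.2.2)) x.2.1

/-- `‖∇p_t(x)‖`, the Euclidean norm of `(X₀p_t, X₁p_t, X₂p_t)` at `x`. -/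
def gradHeatNorm (t : ℝ) (x : G) : ℝ :=
  Real.sqrt (X0 (heatK t) x ^ 2 + X1 (heatK t) x ^ 2 + X2 (heatK t) x ^ 2)

/-- The Poisson kernel `q_t(x) = π⁻² δ(x)^{1/2} (r(x)/sinh r(x)) · t/(t²+r(x)²)²`. -/
def poissonK (t : ℝ) (x : G) : ℝ :=
  (Real.pi ^ 2)⁻¹ * Real.sqrt (deltaG x) *
    (if rG x = 0 then 1 else rG x / Real.sinh (rG x)) *
    (t / (t ^ 2 + rG x ^ 2) ^ 2)

/-- Convolution `f ∗ q_t(x) = ∫ f(xy⁻¹) q_t(y) dρ(y)`. -/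
def convPoisson (f : G → ℝ) (t : ℝ) (x : G) : ℝ := ∫ y, f (gMul x (gInv y)) * poissonK t y ∂ρG

/-- The Poisson maximal operator `M̃f(x) = sup_{t>0} |f ∗ q_t(x)|`. -/
def maxPoisson (f : G → ℝ) (x : G) : ℝ≥0∞ :=
  ⨆ (t : ℝ) (_ : 0 < t), ENNReal.ofReal |convPoisson f t x|

/-- `G_{r₁}(x) = sup_{z ∈ B(x,r₁/2)} sup_{t>0} ‖∇p_t(z)‖`. -/
def Gsup (r1 : ℝ) (x : G) : ℝ≥0∞ :=
  ⨆ (z : G) (_ : 0 < z.2.2 ∧ dG x z < r1 / 2) (t : ℝ) (_ : 0 < t),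
    ENNReal.ofReal (gradHeatNorm t z)

/-- `R₀ = [−1,1]×[−1,1]×[e⁻¹,e]`. -/
def R0set : Set G :=
  Set.Icc (-1 : ℝ) 1 ×ˢ (Set.Icc (-1 : ℝ) 1 ×ˢ Set.Icc (Real.exp (-1)) (Real.exp 1))

/-- `R_L = [L−1,L+1]×[−1,1]×[e⁻¹,e]`. -/
def RLset (L : ℝ) : Set G :=
  Set.Icc (L - 1) (L + 1) ×ˢ (Set.Icc (-1 : ℝ) 1 ×ˢ Set.Icc (Real.exp (-1)) (Real.exp 1))

/-- `f_L = χ_{R_L} − χ_{R₀}`. -/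
def fL (L : ℝ) : G → ℝ := fun x =>
  (RLset L).indicator (fun _ => (1 : ℝ)) x - R0set.indicator (fun _ => (1 : ℝ)) x

/-- The mean of `g` over `R` with respect to `ρ`. -/
def czMean (g : G → ℝ) (R : Set G) : ℝ := (∫ x in R, g x ∂ρG) / (ρG R).toReal

/-- `‖g‖_{BMO} = sup_R ρ(R)⁻¹ ∫_R |g − g_R| dρ` over Calderón–Zygmund sets `R`. -/
def czBMO (g : G → ℝ) : ℝ≥0∞ :=
  ⨆ (R : Set G) (_ : IsCZ R),
    (ρG R)⁻¹ * ∫⁻ x in R, ENNReal.ofReal |g x - czMean g R| ∂ρG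

/-- `‖h‖_{BMO(ℝ)} = sup_Q |Q|⁻¹ ∫_Q |h − h_Q|` over bounded intervals `Q ⊂ ℝ`. -/
def lineBMO (h : ℝ → ℝ) : ℝ≥0∞ :=
  ⨆ (a : ℝ) (b : ℝ) (_ : a < b),
    (ENNReal.ofReal (b - a))⁻¹ *
      ∫⁻ s in Set.Icc a b, ENNReal.ofReal |h s - (∫ u in Set.Icc a b, h u) / (b - a)|

/-- `2R₀ = [−2,2]×[−2,2]×[e⁻²,e²]`. -/
def twoR0set : Set G :=
  Set.Icc (-2 : ℝ) 2 ×ˢ (Set.Icc (-2 : ℝ) 2 ×ˢ Set.Icc (Real.exp (-2)) (Real.exp 2))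

/-- The set `{x₁ > 3, |x₂| < 1, e⁻¹ < a < e}`. -/
def domSpecial : Set G :=
  {x : G | 3 < x.1 ∧ |x.2.1| < 1 ∧ Real.exp (-1) < x.2.2 ∧ x.2.2 < Real.exp 1}

/-- The function equal to `1/(x₁ (log x₁)^{3/2})` on `{x₁ > 3, |x₂| < 1, e⁻¹ < a < e}`,
to `c₀` on `R₀`, and `0` elsewhere. -/
def fSpecial (c0 : ℝ) : G → ℝ := fun x =>
  domSpecial.indicator (fun y => (y.1 * Real.log y.1 ^ ((3 : ℝ)/2))⁻¹) x
    + R0set.indicator (fun _ => c0) x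

/-!
Write `p_t = δ^{1/2} · φ_t(r)`. The fields `X₁` and `X₂` do not differentiate in `a`, so they pass
through `δ^{1/2}` and act only on the radial factor. For fixed `a`, `cosh r` equals `|x|² / (2a)` up
to a constant, so `X_i (cosh r) = x_i`, that is `X_i r = x_i / sinh r`. It remains to compute the
logarithmic derivative of `φ_t`, which is `1/r - cosh r / sinh r - r/(2t)`.
-/

theorem X1_mul_of_const_fst {w : G → ℝ} {x : G} (hw : ∀ s, w (s, x.2.1, x.2.2) = w x)
    (f : G → ℝ) : X1 (fun y => w y * f y) x = w x * X1 f x := by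
  simp only [X1, hw, deriv_const_mul_field]
  ring

theorem X2_mul_of_const_snd {w : G → ℝ} {x : G} (hw : ∀ s, w (x.1, s, x.2.2) = w x)
    (f : G → ℝ) : X2 (fun y => w y * f y) x = w x * X2 f x := by
  simp only [X2, hw, deriv_const_mul_field]
  ring

theorem coshArg_sub_one {x : G} (ha : x.2.2 ≠ 0) :
    coshArg x - 1 = (x.1 ^ 2 + x.2.1 ^ 2 + (x.2.2 - 1) ^ 2) / (2 * x.2.2) := by
  unfold coshArg
  field_simp
  ring

theorem eq_gE_iff (x : G) : x = gE ↔ x.1 ^ 2 + x.2.1 ^ 2 + (x.2.2 - 1) ^ 2 = 0 := by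
  rw [add_eq_zero_iff_of_nonneg (by positivity) (by positivity),
    add_eq_zero_iff_of_nonneg (by positivity) (by positivity)]
  simp [gE, Prod.ext_iff, sub_eq_zero, and_assoc]

theorem one_lt_coshArg {x : G} (ha : 0 < x.2.2) (hx : x ≠ gE) : 1 < coshArg x := by
  have h_ne : x.1 ^ 2 + x.2.1 ^ 2 + (x.2.2 - 1) ^ 2 ≠ 0 := (eq_gE_iff x).not.mp hx
  rw [← sub_pos, coshArg_sub_one ha.ne']
  positivity

theorem rG_eq_arcosh (x : G) : rG x = arcosh (coshArg x) := rfl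

theorem rG_pos {x : G} (ha : 0 < x.2.2) (hx : x ≠ gE) : 0 < rG x :=
  arcosh_pos (one_lt_coshArg ha hx)

theorem hasDerivAt_coshArg_fst (x : G) :
    HasDerivAt (fun s => coshArg (s, x.2.1, x.2.2)) (x.1 / x.2.2) x.1 := by
  have h := ((((hasDerivAt_pow 2 x.1).add_const (x.2.1 ^ 2)).const_mul x.2.2⁻¹).const_add
    (x.2.2 + x.2.2⁻¹)).div_const 2
  exact h.congr_deriv (by ring)

theorem hasDerivAt_coshArg_snd (x : G) :
    HasDerivAt (fun s => coshArg (x.1, s, x.2.2)) (x.2.1 / x.2.2) x.2.1 := by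
  have h := ((((hasDerivAt_pow 2 x.2.1).const_add (x.1 ^ 2)).const_mul x.2.2⁻¹).const_add
    (x.2.2 + x.2.2⁻¹)).div_const 2
  exact h.congr_deriv (by ring)

theorem hasDerivAt_rG_comp {γ : ℝ → G} {s c' : ℝ} (hγ : 1 < coshArg (γ s))
    (hc : HasDerivAt (fun u => coshArg (γ u)) c' s) :
    HasDerivAt (fun u => rG (γ u)) (c' / sinh (rG (γ s))) s := by
  have h := (hasDerivAt_arcosh hγ).comp s hc
  rwa [← sinh_arcosh hγ.le, ← rG_eq_arcosh, inv_mul_eq_div] at h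

section Radial

variable {φ : ℝ → ℝ} {φ' : ℝ} {x : G}

theorem X1_comp_rG (ha : 0 < x.2.2) (hx : x ≠ gE) (hφ : HasDerivAt φ φ' (rG x)) :
    X1 (fun y => φ (rG y)) x = φ' * (x.1 / sinh (rG x)) := by
  have h_rG := hasDerivAt_rG_comp (one_lt_coshArg ha hx) (hasDerivAt_coshArg_fst x)
  have h_deriv : deriv (fun s => φ (rG (s, x.2.1, x.2.2))) x.1 =
      φ' * (x.1 / x.2.2 / sinh (rG x)) := (hφ.comp x.1 h_rG).deriv
  rw [X1, h_deriv]
  field_simp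

theorem X2_comp_rG (ha : 0 < x.2.2) (hx : x ≠ gE) (hφ : HasDerivAt φ φ' (rG x)) :
    X2 (fun y => φ (rG y)) x = φ' * (x.2.1 / sinh (rG x)) := by
  have h_rG := hasDerivAt_rG_comp (one_lt_coshArg ha hx) (hasDerivAt_coshArg_snd x)
  have h_deriv : deriv (fun s => φ (rG (x.1, s, x.2.2))) x.2.1 =
      φ' * (x.2.1 / x.2.2 / sinh (rG x)) := (hφ.comp x.2.1 h_rG).deriv
  rw [X2, h_deriv]
  field_simp

end Radial

/-- The radial profile `φ_t` of the heat kernel, for which `p_t = δ^{1/2} · φ_t(r)`. The factor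
`r / sinh r` is extended by its limit `1` at `r = 0`, as in `heatK`. -/
def heatProfile (t r : ℝ) : ℝ :=
  (8 * π ^ ((3 : ℝ) / 2))⁻¹ * t ^ (-(3 : ℝ) / 2) * (if r = 0 then 1 else r / sinh r) *
    exp (-(r ^ 2) / (4 * t))

theorem heatK_eq_sqrt_deltaG_mul_heatProfile (t : ℝ) :
    heatK t = fun x => √(deltaG x) * heatProfile t (rG x) := by
  funext x
  unfold heatK heatProfile
  ring

theorem hasDerivAt_div_sinh {r : ℝ} (hr : r ≠ 0) :
    HasDerivAt (fun u => u / sinh u) (r / sinh r * (r⁻¹ - cosh r / sinh r)) r := by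
  have h_sinh : sinh r ≠ 0 := sinh_ne_zero.mpr hr
  refine ((hasDerivAt_id' r).div (hasDerivAt_sinh r) h_sinh).congr_deriv ?_
  field_simp

theorem hasDerivAt_exp_neg_sq_div (c r : ℝ) :
    HasDerivAt (fun u => exp (-(u ^ 2) / c)) (exp (-(r ^ 2) / c) * -(2 * r / c)) r :=
  ((hasDerivAt_pow 2 r).fun_neg.div_const c).exp.congr_deriv (by ring)

theorem hasDerivAt_heatProfile (t : ℝ) {r : ℝ} (hr : r ≠ 0) :
    HasDerivAt (heatProfile t)
      (heatProfile t r * (r⁻¹ - cosh r / sinh r - r / (2 * t))) r := by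
  have h_away : heatProfile t =ᶠ[nhds r] fun u =>
      (8 * π ^ ((3 : ℝ) / 2))⁻¹ * t ^ (-(3 : ℝ) / 2) * (u / sinh u) *
        exp (-(u ^ 2) / (4 * t)) := by
    filter_upwards [eventually_ne_nhds hr] with u hu
    rw [heatProfile, if_neg hu]
  have h_deriv := ((hasDerivAt_div_sinh hr).const_mul
    ((8 * π ^ ((3 : ℝ) / 2))⁻¹ * t ^ (-(3 : ℝ) / 2))).mul (hasDerivAt_exp_neg_sq_div (4 * t) r)
  refine (h_deriv.congr_of_eventuallyEq h_away).congr_deriv ?_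
  rw [h_away.eq_of_nhds]
  ring

theorem X1_X2_heatK (t : ℝ) (ht : 0 < t) (x : G) (ha : 0 < x.2.2) (hx : x ≠ gE) :
    X1 (heatK t) x = heatK t x * (x.1 / Real.sinh (rG x)) *
        ((rG x)⁻¹ - Real.cosh (rG x) / Real.sinh (rG x) - rG x / (2 * t)) ∧
    X2 (heatK t) x = heatK t x * (x.2.1 / Real.sinh (rG x)) *
        ((rG x)⁻¹ - Real.cosh (rG x) / Real.sinh (rG x) - rG x / (2 * t)) := by
  have h_profile := hasDerivAt_heatProfile t (rG_pos ha hx).ne'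
  rw [heatK_eq_sqrt_deltaG_mul_heatProfile]
  constructor
  · rw [X1_mul_of_const_fst (fun _ => rfl), X1_comp_rG ha hx h_profile]
    ring
  · rw [X2_mul_of_const_snd (fun _ => rfl), X2_comp_rG ha hx h_profile]
    ring
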